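/- There exists a constant C > 0 such that for every continuously differentiable compactly supported function ω : ℝ² → ℝ, the Biot–Savart velocity K[ω](x) = (1/(2π))·∫_{ℝ²} ((x − y)^⊥/‖x − y‖²)·ω(y) dy is continuously differentiable on ℝ² and its total derivative satisfies sup_{x ∈ ℝ²} ‖DK[ω](x)‖ ≤ C·(1 + ‖ω‖_{L¹(ℝ²)} + ‖ω‖_{L^∞(ℝ²)} + ‖ω‖_{L^∞(ℝ²)}·log(1 + ‖∇ω‖_{L^∞(ℝ²)})). -/

import Mathlib

open Real MeasureTheory

/-- The Biot–Savart velocity field `K[ω](x) = (1/2π) ∫ (x-y)^⊥/‖x-y‖² ω(y) dy` in the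
plane `ℝ² ≃ ℂ`, where `v^⊥ = I·v`. -/
noncomputable def Kvel (ω : ℂ → ℝ) (x : ℂ) : ℂ :=
  (2 * π)⁻¹ • ∫ y : ℂ, Complex.I * (x - y) / (‖x - y‖ : ℂ) ^ 2 * (ω y : ℂ)

noncomputable def bsK (z : ℂ) : ℂ := Complex.I * z / (‖z‖ : ℂ) ^ 2

noncomputable def bsE (e : ℝ) (z : ℂ) : ℂ := (‖z‖ ^ 2 + e ^ 2)⁻¹ • (Complex.I * z)

lemma vball : (volume : Measure ℂ).real (Metric.ball 0 1) = π := by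
  simp [Measure.real, Complex.volume_ball]

lemma bs_diff (e : ℝ) (he : 0 < e) (z : ℂ) :
    ‖bsK z - bsE e z‖ = e ^ 2 / (‖z‖ * (‖z‖ ^ 2 + e ^ 2)) := by
  rcases eq_or_ne z 0 with rfl | hz
  · simp [bsK, bsE]
  have hz' : 0 < ‖z‖ := norm_pos_iff.mpr hz
  have : bsK z - bsE e z = ((‖z‖ ^ 2)⁻¹ - (‖z‖ ^ 2 + e ^ 2)⁻¹) • (Complex.I * z) := by
    rw [sub_smul, bsK, bsE]
    congr 1
    rw [Complex.real_smul]
    push_cast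
    rw [div_eq_inv_mul]
  rw [this, norm_smul, norm_mul, Complex.norm_I, one_mul, Real.norm_eq_abs]
  have h2 : (‖z‖ ^ 2)⁻¹ - (‖z‖ ^ 2 + e ^ 2)⁻¹ = e ^ 2 / (‖z‖ ^ 2 * (‖z‖ ^ 2 + e ^ 2)) := by
    field_simp
    ring
  rw [h2, abs_of_nonneg (by positivity)]
  field_simp

lemma near_aux (e : ℝ) (he : 0 < e) : Set.EqOn
    (fun r : ℝ => r ^ (Module.finrank ℝ ℂ - 1) • (e ^ 2 / (r * (r ^ 2 + e ^ 2))))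
    (fun r : ℝ => (1 + (e⁻¹ * r) ^ 2)⁻¹) (Set.Ioi 0) := by
  intro r hr
  have hr : 0 < r := hr
  simp only [Complex.finrank_real_complex, smul_eq_mul]
  norm_num
  field_simp
  ring

lemma near_integrable (e : ℝ) (he : 0 < e) :
    Integrable (fun z : ℂ => e ^ 2 / (‖z‖ * (‖z‖ ^ 2 + e ^ 2))) := by
  refine (integrable_fun_norm_addHaar (volume : Measure ℂ)
    (f := fun r => e ^ 2 / (r * (r ^ 2 + e ^ 2)))).2 ?_
  rw [integrableOn_congr_fun (near_aux e he) measurableSet_Ioi]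
  exact (integrable_inv_one_add_sq.comp_mul_left' (inv_ne_zero he.ne')).integrableOn

lemma near_integral (e : ℝ) (he : 0 < e) :
    ∫ z : ℂ, e ^ 2 / (‖z‖ * (‖z‖ ^ 2 + e ^ 2)) = π ^ 2 * e := by
  rw [integral_fun_norm_addHaar (volume : Measure ℂ)
    (fun r => e ^ 2 / (r * (r ^ 2 + e ^ 2))),
    setIntegral_congr_fun measurableSet_Ioi (near_aux e he),
    integral_comp_mul_left_Ioi (fun r : ℝ => (1 + r ^ 2)⁻¹) 0 (inv_pos.2 he), vball]
  simp
  ring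

noncomputable def gL (e r : ℝ) : ℝ := (Set.Iio (1:ℝ)).indicator (fun r => (r ^ 2 + e ^ 2)⁻¹) r

lemma gL_aux (e : ℝ) :
    (fun r : ℝ => r ^ (Module.finrank ℝ ℂ - 1) • gL e r) =
    (Set.Iio (1:ℝ)).indicator (fun r : ℝ => r / (r ^ 2 + e ^ 2)) := by
  ext r
  by_cases h : r < 1 <;> simp [gL, h, div_eq_mul_inv]

lemma gL_cont (e : ℝ) (he : 0 < e) : Continuous (fun r : ℝ => r / (r ^ 2 + e ^ 2)) := by
  apply Continuous.div (by fun_prop) (by fun_prop)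
  intro x; positivity

lemma gL_integrable (e : ℝ) (he : 0 < e) : Integrable (fun z : ℂ => gL e ‖z‖) := by
  refine (integrable_fun_norm_addHaar (volume : Measure ℂ) (f := gL e)).2 ?_
  rw [gL_aux, integrableOn_indicator_iff measurableSet_Iio, Set.inter_comm, Set.Ioi_inter_Iio]
  exact ((gL_cont e he).integrableOn_Icc (a := 0) (b := 1)).mono_set Set.Ioo_subset_Icc_self

lemma gL_integral (e : ℝ) (he : 0 < e) :
    ∫ z : ℂ, gL e ‖z‖ = π * (Real.log (1 + e ^ 2) - Real.log (e ^ 2)) := by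
  rw [integral_fun_norm_addHaar (volume : Measure ℂ) (gL e), gL_aux,
    setIntegral_indicator measurableSet_Iio, Set.Ioi_inter_Iio, vball,
    ← integral_Ioc_eq_integral_Ioo, ← intervalIntegral.integral_of_le zero_le_one,
    intervalIntegral.integral_eq_sub_of_hasDerivAt
      (f := fun r => Real.log (r ^ 2 + e ^ 2) / 2) (f' := fun r => r / (r ^ 2 + e ^ 2))]
  · simp
    ring
  · intro r _
    have h : HasDerivAt (fun r : ℝ => r ^ 2 + e ^ 2) (2 * r) r := by
      simpa using (hasDerivAt_pow 2 r).add_const (e ^ 2)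
    exact ((h.log (by positivity)).div_const 2).congr_deriv (by ring)
  · exact (gL_cont e he).intervalIntegrable _ _

lemma bsE_contDiff (e : ℝ) (he : 0 < e) : ContDiff ℝ 1 (bsE e) := by
  have h : ContDiff ℝ 1 (fun z : ℂ => ‖z‖ ^ 2 + e ^ 2) := (contDiff_norm_sq ℝ).add contDiff_const
  exact (h.inv (fun z => by positivity)).smul (contDiff_const.mul contDiff_id)

lemma bsE_fderiv (e : ℝ) (he : 0 < e) (z h : ℂ) :
    ‖fderiv ℝ (bsE e) z h‖ ≤ 3 * ‖h‖ * (‖z‖ ^ 2 + e ^ 2)⁻¹ := by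
  have hq : 0 < ‖z‖ ^ 2 + e ^ 2 := by positivity
  have h1 : HasFDerivAt (fun z : ℂ => ‖z‖ ^ 2 + e ^ 2) (2 • (innerSL ℝ z)) z :=
    ((hasStrictFDerivAt_norm_sq z).hasFDerivAt).add_const _
  have h2 := (hasDerivAt_inv hq.ne').comp_hasFDerivAt z h1
  have h3 : HasFDerivAt (fun z : ℂ => Complex.I * z)
    (Complex.I • ContinuousLinearMap.id ℝ ℂ) z := (hasFDerivAt_id z).const_mul Complex.I
  have h4 : fderiv ℝ (bsE e) z = _ := (h2.smul h3).fderiv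
  rw [h4]
  simp only [add_apply, smul_apply,
    ContinuousLinearMap.smulRight_apply, Function.comp, ContinuousLinearMap.id_apply]
  refine (norm_add_le _ _).trans ?_
  rw [norm_smul, norm_smul, norm_smul, norm_smul, norm_mul, Complex.norm_I]
  have h5 : ‖(2 • (innerSL ℝ z) h : ℝ)‖ ≤ 2 * (‖z‖ * ‖h‖) := by
    rw [nsmul_eq_mul, norm_mul]
    simpa using abs_real_inner_le_norm z h
  have h6 : ‖(-((‖z‖ ^ 2 + e ^ 2) ^ 2)⁻¹ : ℝ)‖ = ((‖z‖ ^ 2 + e ^ 2)⁻¹) ^ 2 := by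
    rw [norm_neg, Real.norm_of_nonneg (by positivity), inv_pow]
  rw [h6, Real.norm_of_nonneg (by positivity : 0 ≤ (‖z‖ ^ 2 + e ^ 2)⁻¹)]
  have h7 : ‖z‖ ^ 2 * (‖z‖ ^ 2 + e ^ 2)⁻¹ ≤ 1 := by
    rw [← div_eq_mul_inv, div_le_one hq]; nlinarith
  calc _ ≤ (‖z‖ ^ 2 + e ^ 2)⁻¹ * (1 * ‖h‖) +
      ((‖z‖ ^ 2 + e ^ 2)⁻¹) ^ 2 * (2 * (‖z‖ * ‖h‖)) * (1 * ‖z‖) := by gcongr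
    _ = (‖z‖ ^ 2 + e ^ 2)⁻¹ * ‖h‖ * (1 + 2 * (‖z‖ ^ 2 * (‖z‖ ^ 2 + e ^ 2)⁻¹)) := by ring
    _ ≤ (‖z‖ ^ 2 + e ^ 2)⁻¹ * ‖h‖ * (1 + 2 * 1) := by gcongr
    _ = _ := by ring

lemma diff_integrable (e : ℝ) (he : 0 < e) : Integrable (fun z => bsK z - bsE e z) := by
  refine (near_integrable e he).mono' ?_ (Filter.Eventually.of_forall fun z => (bs_diff e he z).le)
  have h1 : Measurable bsK := by unfold bsK; fun_prop
  have h2 : Measurable (bsE e) := (bsE_contDiff e he).continuous.measurable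
  exact (h1.sub h2).aestronglyMeasurable

lemma bsK_loc : LocallyIntegrable bsK := by
  have := (diff_integrable 1 one_pos).locallyIntegrable.add
    (bsE_contDiff 1 one_pos).continuous.locallyIntegrable
  have h : (fun z => bsK z - bsE 1 z) + bsE 1 = bsK := by ext1 z; simp
  rwa [h] at this

noncomputable abbrev bsL : ℂ →L[ℝ] ℝ →L[ℝ] ℂ := (ContinuousLinearMap.lsmul ℝ ℝ).flip

open scoped Convolution

lemma Kvel_eq (ω : ℂ → ℝ) : Kvel ω = fun x => (2 * π)⁻¹ • (bsK ⋆[bsL, volume] ω) x := by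
  ext1 x
  rw [Kvel, convolution_eq_swap]
  congr 1
  refine integral_congr_ae (Filter.Eventually.of_forall fun y => ?_)
  simp [bsK, bsL, mul_comm]

lemma Kvel_contDiff (ω : ℂ → ℝ) (h1 : ContDiff ℝ 1 ω) (h2 : HasCompactSupport ω) :
    ContDiff ℝ 1 (Kvel ω) := by
  rw [Kvel_eq]
  exact (h2.contDiff_convolution_right bsL bsK_loc h1).const_smul ((2 * π)⁻¹ : ℝ)

lemma Kvel_fderiv (ω : ℂ → ℝ) (h1 : ContDiff ℝ 1 ω) (h2 : HasCompactSupport ω) (x h : ℂ) :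
    fderiv ℝ (Kvel ω) x h = (2 * π)⁻¹ • ∫ t, (fderiv ℝ ω (x - t) h) • bsK t := by
  have := (h2.hasFDerivAt_convolution_right bsL bsK_loc h1 x).const_smul ((2 * π)⁻¹)
  rw [Kvel_eq]
  have h3 : fderiv ℝ (fun x => (2 * π)⁻¹ • (bsK ⋆[bsL, volume] ω) x) x = _ := this.fderiv
  rw [h3, smul_apply, convolution_precompR_apply _ bsK_loc (h2.fderiv ℝ)
    (h1.continuous_fderiv one_ne_zero)]
  rfl

lemma parts (ω : ℂ → ℝ) (h1 : ContDiff ℝ 1 ω) (h2 : HasCompactSupport ω) (x h : ℂ)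
    (e : ℝ) (he : 0 < e) :
    ∫ t, (fderiv ℝ ω (x - t) h) • bsE e t = ∫ t, ω (x - t) • fderiv ℝ (bsE e) t h := by
  have hs : HasCompactSupport (fun t => ω (x - t)) := h2.comp_homeomorph (Homeomorph.subLeft x)
  have hs' : HasCompactSupport (fun t => fderiv ℝ ω (x - t) h) :=
    (h2.fderiv_apply ℝ h).comp_homeomorph (Homeomorph.subLeft x)
  have hd (t : ℂ) : fderiv ℝ (fun t => ω (x - t)) t = - fderiv ℝ ω (x - t) := by
    have := ((h1.differentiable one_ne_zero) (x - t)).hasFDerivAt.comp t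
      ((hasFDerivAt_id t).const_sub x)
    have h3 : fderiv ℝ (fun t => ω (x - t)) t = _ := this.fderiv
    rw [h3]
    ext v
    simp
  have c1 := h1.continuous
  have c2 : Continuous (fderiv ℝ ω) := h1.continuous_fderiv one_ne_zero
  have c3 := (bsE_contDiff e he).continuous
  have c4 : Continuous (fderiv ℝ (bsE e)) := (bsE_contDiff e he).continuous_fderiv one_ne_zero
  have i1 : Integrable (fun t => fderiv ℝ ω (x - t) h • bsE e t) :=
    Continuous.integrable_of_hasCompactSupport (by fun_prop) hs'.smul_right
  rw [integral_smul_fderiv_eq_neg_fderiv_smul_of_integrable, ← integral_neg]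
  · simp [hd]
  · simpa [hd] using i1.neg
  · exact Continuous.integrable_of_hasCompactSupport (by fun_prop) hs.smul_right
  · exact Continuous.integrable_of_hasCompactSupport (by fun_prop) hs.smul_right
  · intro t _
    exact (h1.differentiable one_ne_zero).differentiableAt.comp t (by fun_prop)
  · intro t _
    exact ((bsE_contDiff e he).differentiable one_ne_zero).differentiableAt

lemma main_bound (ω : ℂ → ℝ) (h1 : ContDiff ℝ 1 ω) (h2 : HasCompactSupport ω) (x h : ℂ)
    (e : ℝ) (he : 0 < e) (M G : ℝ) (hM : ∀ y, |ω y| ≤ M) (hG : ∀ y, ‖fderiv ℝ ω y‖ ≤ G) :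
    ‖∫ t, (fderiv ℝ ω (x - t) h) • bsK t‖ ≤
      (G * (π ^ 2 * e) + 3 * (M * (π * (Real.log (1 + e ^ 2) - Real.log (e ^ 2))) +
        ∫ y, |ω y|)) * ‖h‖ := by
  have c1 := h1.continuous
  have c2 : Continuous (fderiv ℝ ω) := h1.continuous_fderiv one_ne_zero
  have c3 := (bsE_contDiff e he).continuous
  have hs' : HasCompactSupport (fun t => fderiv ℝ ω (x - t) h) :=
    (h2.fderiv_apply ℝ h).comp_homeomorph (Homeomorph.subLeft x)
  have hGh (y : ℂ) : ‖fderiv ℝ ω y h‖ ≤ G * ‖h‖ := (fderiv ℝ ω y).le_of_opNorm_le (hG y) h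
  have M0 : 0 ≤ M := (abs_nonneg _).trans (hM 0)
  have G0 : 0 ≤ G := (norm_nonneg _).trans (hG 0)
  have i1 : Integrable (fun t => fderiv ℝ ω (x - t) h • bsE e t) :=
    Continuous.integrable_of_hasCompactSupport (by fun_prop) hs'.smul_right
  have i2 : Integrable (fun t => fderiv ℝ ω (x - t) h • (bsK t - bsE e t)) := by
    refine (diff_integrable e he).bdd_smul (G * ‖h‖) ?_ (Filter.Eventually.of_forall fun t => hGh _)
    exact Continuous.aestronglyMeasurable (by fun_prop)
  have iω : Integrable (fun t => |ω (x - t)|) :=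
    ((h1.continuous.integrable_of_hasCompactSupport h2).abs).comp_sub_left x
  have split : ∫ t, (fderiv ℝ ω (x - t) h) • bsK t =
      (∫ t, (fderiv ℝ ω (x - t) h) • (bsK t - bsE e t)) +
        ∫ t, ω (x - t) • fderiv ℝ (bsE e) t h := by
    rw [← parts ω h1 h2 x h e he, ← integral_add i2 i1]
    congr 1; ext1 t; rw [← smul_add, sub_add_cancel]
  have b1 : ‖∫ t, (fderiv ℝ ω (x - t) h) • (bsK t - bsE e t)‖ ≤ G * (π ^ 2 * e) * ‖h‖ := by
    have := norm_integral_le_of_norm_le ((near_integrable e he).const_mul (G * ‖h‖))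
      (f := fun t => (fderiv ℝ ω (x - t) h) • (bsK t - bsE e t))
      (Filter.Eventually.of_forall fun t => by
        rw [norm_smul, bs_diff e he]
        gcongr
        exact hGh _)
    rw [integral_const_mul, near_integral e he] at this
    linarith
  have b2 : ‖∫ t, ω (x - t) • fderiv ℝ (bsE e) t h‖ ≤
      3 * ‖h‖ * (M * (π * (Real.log (1 + e ^ 2) - Real.log (e ^ 2))) + ∫ y, |ω y|) := by
    have := norm_integral_le_of_norm_le
      ((((gL_integrable e he).const_mul M).add iω).const_mul (3 * ‖h‖))
      (f := fun t => ω (x - t) • fderiv ℝ (bsE e) t h)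
      (Filter.Eventually.of_forall fun t => by
        rw [norm_smul, Real.norm_eq_abs]
        calc _ ≤ |ω (x - t)| * (3 * ‖h‖ * (‖t‖ ^ 2 + e ^ 2)⁻¹) := by
              gcongr; exact bsE_fderiv e he t h
          _ = 3 * ‖h‖ * (|ω (x - t)| * (‖t‖ ^ 2 + e ^ 2)⁻¹) := by ring
          _ ≤ _ := by
              refine mul_le_mul_of_nonneg_left ?_ (by positivity)
              simp only [Pi.add_apply]
              by_cases ht : ‖t‖ < 1
              · have : gL e ‖t‖ = (‖t‖ ^ 2 + e ^ 2)⁻¹ := by simp [gL, ht]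
                rw [this]
                have := mul_le_mul_of_nonneg_right (hM (x - t))
                  (by positivity : 0 ≤ (‖t‖ ^ 2 + e ^ 2)⁻¹)
                linarith [abs_nonneg (ω (x - t))]
              · have : gL e ‖t‖ = 0 := by simp [gL, ht]
                rw [this, mul_zero, zero_add]
                refine mul_le_of_le_one_right (abs_nonneg _) (inv_le_one_of_one_le₀ ?_)
                nlinarith [sq_nonneg e])
    rw [integral_const_mul] at this
    simp only [Pi.add_apply] at this
    rw [integral_add ((gL_integrable e he).const_mul M) iω,
      integral_const_mul, gL_integral e he,
      integral_sub_left_eq_self (fun y => |ω y|) volume x] at this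
    exact this
  rw [split]
  refine (norm_add_le _ _).trans ?_
  linarith

theorem biot_savart_gradient_bound :
    ∃ C > 0, ∀ ω : ℂ → ℝ, ContDiff ℝ 1 ω → HasCompactSupport ω →
      ContDiff ℝ 1 (Kvel ω) ∧
      ∀ x : ℂ, ‖fderiv ℝ (Kvel ω) x‖ ≤
        C * (1 + (∫ y : ℂ, |ω y|) + (⨆ y : ℂ, |ω y|)
          + (⨆ y : ℂ, |ω y|) * Real.log (1 + ⨆ y : ℂ, ‖fderiv ℝ ω y‖)) := by
  refine ⟨(2 * π)⁻¹ * (π ^ 2 + 3 + 6 * π), by positivity, fun ω h1 h2 =>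
    ⟨Kvel_contDiff ω h1 h2, fun x => ?_⟩⟩
  set M := ⨆ y : ℂ, |ω y| with hMdef
  set G := ⨆ y : ℂ, ‖fderiv ℝ ω y‖ with hGdef
  have hM : ∀ y, |ω y| ≤ M := by
    obtain ⟨c, hc⟩ := h2.exists_bound_of_continuous h1.continuous
    exact le_ciSup (f := fun y => |ω y|) ⟨c, by rintro _ ⟨y, rfl⟩; exact hc y⟩
  have hG : ∀ y, ‖fderiv ℝ ω y‖ ≤ G := by
    obtain ⟨c, hc⟩ := (h2.fderiv ℝ).exists_bound_of_continuous (h1.continuous_fderiv one_ne_zero)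
    exact le_ciSup (f := fun y => ‖fderiv ℝ ω y‖) ⟨c, by rintro _ ⟨y, rfl⟩; exact hc y⟩
  have M0 : 0 ≤ M := (abs_nonneg _).trans (hM 0)
  have G0 : 0 ≤ G := (norm_nonneg _).trans (hG 0)
  have I0 : 0 ≤ ∫ y, |ω y| := integral_nonneg fun y => abs_nonneg _
  have L0 : 0 ≤ Real.log (1 + G) := Real.log_nonneg (by linarith)
  have hl : Real.log (1 + ((1 + G)⁻¹) ^ 2) - Real.log (((1 + G)⁻¹) ^ 2) ≤
      1 + 2 * Real.log (1 + G) := by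
    rw [Real.log_pow, Real.log_inv]
    have a : Real.log (1 + ((1 + G)⁻¹) ^ 2) ≤ 1 := by
      have b := Real.log_le_sub_one_of_pos (by positivity : 0 < 1 + ((1 + G)⁻¹) ^ 2)
      have c : ((1 + G)⁻¹) ^ 2 ≤ 1 :=
        pow_le_one₀ (by positivity) (inv_le_one_of_one_le₀ (by linarith))
      linarith
    push_cast
    linarith
  have hg : G * (1 + G)⁻¹ ≤ 1 := by
    rw [← div_eq_mul_inv, div_le_one (by positivity)]; linarith
  have ML := mul_nonneg M0 L0
  have hπ := Real.pi_pos
  refine ContinuousLinearMap.opNorm_le_bound _ (by positivity) fun h => ?_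
  rw [Kvel_fderiv ω h1 h2, norm_smul, Real.norm_of_nonneg (by positivity), mul_assoc, mul_assoc]
  refine mul_le_mul_of_nonneg_left ?_ (by positivity)
  refine (main_bound ω h1 h2 x h (1 + G)⁻¹ (by positivity) M G hM hG).trans ?_
  rw [← mul_assoc (π ^ 2 + 3 + 6 * π)]
  refine mul_le_mul_of_nonneg_right ?_ (norm_nonneg h)
  calc _ = π ^ 2 * (G * (1 + G)⁻¹) + 3 * (M * (π * (Real.log (1 + ((1 + G)⁻¹) ^ 2) -
        Real.log (((1 + G)⁻¹) ^ 2))) + ∫ y, |ω y|) := by ring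
    _ ≤ π ^ 2 * 1 + 3 * (M * (π * (1 + 2 * Real.log (1 + G))) + ∫ y, |ω y|) := by gcongr
    _ ≤ _ := by
      have := sq_nonneg π
      have p1 := mul_nonneg (sq_nonneg π) I0
      have p2 := mul_nonneg (sq_nonneg π) M0
      have p3 := mul_nonneg (sq_nonneg π) ML
      have p4 := mul_nonneg hπ.le I0
      have p5 := mul_nonneg hπ.le M0
      have p6 := mul_nonneg hπ.le ML
      nlinarith
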